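/- arXiv:2403.05836 — 12 statements merged into one kernel-verified Lean document; each statement's English description precedes it below -/
import Mathlib

section
/- Let τ₁ be the topology on the bicyclic monoid C(p,q) generated by taking, as a neighbourhood base at each point q^i p^j, the family of sets U_n(q^i p^j) = {q^i p^j} ∪ {q^s p^t : s ≥ n and t ≥ n} for n ∈ ℕ. Then (C(p,q), τ₁) is a non-discrete T₁ topological inverse semigroup, i.e., τ₁ is a non-discrete T₁ topology for which multiplication is jointly continuous and inversion is continuous. -/
/-- The bicyclic monoid `C(p,q)` modeled on `ℕ × ℕ`, where `(k, l)` represents `q^k p^l`: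
`(k,l)·(m,n) = (k + (m ∸ l), n + (l ∸ m))`. -/
def bmul (a b : ℕ × ℕ) : ℕ × ℕ := (a.1 + (b.1 - a.2), b.2 + (a.2 - b.1))

/-- Inversion on the bicyclic monoid: `(q^k p^l)⁻¹ = q^l p^k`. -/
def binv (a : ℕ × ℕ) : ℕ × ℕ := (a.2, a.1)

/-- `U_n(q^i p^j) = {q^i p^j} ∪ {q^s p^t : s ≥ n, t ≥ n}`. -/
def U1 (n : ℕ) (x : ℕ × ℕ) : Set (ℕ × ℕ) := {x} ∪ {y | n ≤ y.1 ∧ n ≤ y.2}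

/-- The topology `τ₁` on the bicyclic monoid generated by the sets `U_n(q^i p^j)`
as a neighbourhood base at each point `q^i p^j`. -/
def tau1 : TopologicalSpace (ℕ × ℕ) :=
  TopologicalSpace.generateFrom {S | ∃ x : ℕ × ℕ, ∃ n : ℕ, S = U1 n x}

theorem U1_open (n : ℕ) (x : ℕ × ℕ) : @IsOpen _ tau1 (U1 n x) :=
  TopologicalSpace.isOpen_generateFrom_of_mem ⟨x, n, rfl⟩

/-- Proposition 1: `(C(p,q), τ₁)` is a non-discrete `T₁` topological inverse semigroup:
`τ₁` is non-discrete, `T₁`, multiplication is jointly continuous and inversion is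
continuous. -/
theorem stmt2 :
    tau1 ≠ ⊥ ∧
    @T1Space (ℕ × ℕ) tau1 ∧
    @Continuous ((ℕ × ℕ) × (ℕ × ℕ)) (ℕ × ℕ)
      (@instTopologicalSpaceProd (ℕ × ℕ) (ℕ × ℕ) tau1 tau1) tau1
      (fun p => bmul p.1 p.2) ∧
    @Continuous (ℕ × ℕ) (ℕ × ℕ) tau1 tau1 binv := by
  refine ⟨?_, ?_, ?_, ?_⟩
  · intro h
    have h0 : @IsOpen _ tau1 ({((0:ℕ),(0:ℕ))} : Set (ℕ × ℕ)) := by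
      rw [h]; trivial
    have ht : Filter.Tendsto (fun k : ℕ => (k, k)) Filter.atTop (@nhds _ tau1 (0, 0)) := by
      unfold tau1
      rw [TopologicalSpace.tendsto_nhds_generateFrom_iff]
      rintro S ⟨x, n, rfl⟩ -
      filter_upwards [Filter.eventually_ge_atTop n] with k hk
      exact Or.inr ⟨hk, hk⟩
    have hm : ({((0:ℕ),(0:ℕ))} : Set (ℕ × ℕ)) ∈ @nhds _ tau1 (0, 0) := by
      letI : TopologicalSpace (ℕ × ℕ) := tau1
      exact (h0 : IsOpen _).mem_nhds (Set.mem_singleton _)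
    have h1 := ht.eventually_mem hm
    obtain ⟨k, hk, hk'⟩ := ((Filter.eventually_ge_atTop 1).and h1).exists
    simp at hk'
    omega
  · letI := tau1
    rw [t1Space_iff_exists_open]
    intro x y hxy
    refine ⟨U1 (y.1 + 1) x, U1_open _ _, Or.inl rfl, ?_⟩
    rintro (h | h)
    · exact hxy (Eq.symm h)
    · have := h.1
      omega
  · letI : TopologicalSpace (ℕ × ℕ) := tau1
    refine continuous_generateFrom_iff.2 ?_
    rintro S ⟨x, n, rfl⟩
    rw [@isOpen_prod_iff _ _ tau1 tau1]
    intro a b hab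
    refine ⟨U1 (n + a.2 + b.1) a, U1 (n + a.2 + b.1) b, U1_open _ _, U1_open _ _,
      Or.inl rfl, Or.inl rfl, ?_⟩
    rintro ⟨c, d⟩ ⟨hc, hd⟩
    rcases hc with hc | hc <;> rcases hd with hd | hd
    · obtain rfl : c = a := hc
      obtain rfl : d = b := hd
      exact hab
    · obtain rfl : c = a := hc
      right
      simp only [Set.mem_ofPred_eq, bmul] at hd ⊢
      omega
    · obtain rfl : d = b := hd
      right
      simp only [Set.mem_ofPred_eq, bmul] at hc ⊢
      omega
    · right
      simp only [Set.mem_ofPred_eq, bmul] at hc hd ⊢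
      omega
  · letI : TopologicalSpace (ℕ × ℕ) := tau1
    refine continuous_generateFrom_iff.2 ?_
    rintro S ⟨x, n, rfl⟩
    have : binv ⁻¹' U1 n x = U1 n (binv x) := by
      ext ⟨c, d⟩
      obtain ⟨e, f⟩ := x
      simp only [U1, binv, Set.mem_preimage, Set.mem_union, Set.mem_singleton_iff,
        Set.mem_ofPred_eq, Prod.mk.injEq]
      tauto
    rw [this]
    exact U1_open _ _
end

section
/- Let τ₂ be the topology on the bicyclic monoid C(p,q) generated by taking, as a neighbourhood base at each point q^i p^j, the family of sets O_n(q^i p^j) = {q^i p^j} ∪ (↓≼ q^{i+n} p^{j+n} \ {q^{i+n} p^{j+n}}) for n ∈ ℕ. Then (C(p,q), τ₂) is a non-discrete locally compact T₁ topological inverse semigroup, i.e., τ₂ is a non-discrete T₁ locally compact topology for which multiplication is jointly continuous and inversion is continuous. -/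
/-- The natural partial order on the bicyclic monoid: `x ≼ y` iff `x = y·e`
for some idempotent `e`. -/
def bLe (x y : ℕ × ℕ) : Prop := ∃ e : ℕ × ℕ, bmul e e = e ∧ x = bmul y e

/-- `↓≼ x`, the down-set of `x` with respect to the natural partial order. -/
def bDown (x : ℕ × ℕ) : Set (ℕ × ℕ) := {y | bLe y x}

/-- `O_n(q^i p^j) = {q^i p^j} ∪ (↓≼ q^{i+n} p^{j+n} \ {q^{i+n} p^{j+n}})`. -/
def O2 (n : ℕ) (x : ℕ × ℕ) : Set (ℕ × ℕ) :=
  {x} ∪ (bDown (x.1 + n, x.2 + n) \ {(x.1 + n, x.2 + n)})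

/-- The topology `τ₂` on the bicyclic monoid generated by the sets `O_n(q^i p^j)`
as a neighbourhood base at each point `q^i p^j`. -/
def tau2 : TopologicalSpace (ℕ × ℕ) :=
  TopologicalSpace.generateFrom {S | ∃ x : ℕ × ℕ, ∃ n : ℕ, S = O2 n x}

theorem mem_O2 (n : ℕ) (x y : ℕ × ℕ) :
    y ∈ O2 n x ↔ y = x ∨ ∃ k, n < k ∧ y = (x.1 + k, x.2 + k) := by
  obtain ⟨a, b⟩ := x
  obtain ⟨c, d⟩ := y
  simp only [O2, bDown, bLe, bmul, Set.mem_union, Set.mem_singleton_iff, Set.mem_sdiff,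
    Set.mem_ofPred_eq, Prod.exists, Prod.mk.injEq]
  constructor
  · rintro (h | ⟨⟨e, f, h1, h2⟩, h3⟩)
    · exact Or.inl h
    · exact Or.inr ⟨c - a, by omega, by omega, by omega⟩
  · rintro (h | ⟨k, hk, h1, h2⟩)
    · exact Or.inl h
    · exact Or.inr ⟨⟨b + k, b + k, by omega, by omega⟩, by omega⟩

theorem tau2_open (U : Set (ℕ × ℕ)) :
    @IsOpen _ tau2 U ↔ ∀ x ∈ U, ∃ N, ∀ k, N ≤ k → (x.1 + k, x.2 + k) ∈ U := by
  constructor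
  · intro h
    induction h with
    | basic s hs =>
      obtain ⟨y, n, rfl⟩ := hs
      intro x hx
      refine ⟨n + 1, fun k hk => ?_⟩
      rw [mem_O2] at hx ⊢
      rcases hx with rfl | ⟨l, hl, rfl⟩
      · exact Or.inr ⟨k, by omega, rfl⟩
      · exact Or.inr ⟨l + k, by omega, by simp [add_assoc]⟩
    | univ => intro x _; exact ⟨0, fun _ _ => trivial⟩
    | inter s t _ _ hs ht =>
      intro x hx
      obtain ⟨N, hN⟩ := hs x hx.1
      obtain ⟨M, hM⟩ := ht x hx.2
      exact ⟨N + M, fun k hk => ⟨hN k (by omega), hM k (by omega)⟩⟩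
    | sUnion S _ ih =>
      rintro x ⟨s, hs, hx⟩
      obtain ⟨N, hN⟩ := ih s hs x hx
      exact ⟨N, fun k hk => ⟨s, hs, hN k hk⟩⟩
  · intro h
    refine (@isOpen_iff_forall_mem_open _ tau2 U).2 fun x hx => ?_
    obtain ⟨N, hN⟩ := h x hx
    refine ⟨O2 N x, ?_, TopologicalSpace.isOpen_generateFrom_of_mem ⟨x, N, rfl⟩, Or.inl rfl⟩
    intro y hy
    rw [mem_O2] at hy
    rcases hy with rfl | ⟨k, hk, rfl⟩
    · exact hx
    · exact hN k hk.le

theorem O2_open (n : ℕ) (x : ℕ × ℕ) : @IsOpen _ tau2 (O2 n x) :=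
  TopologicalSpace.isOpen_generateFrom_of_mem ⟨x, n, rfl⟩

theorem O2_compact (n : ℕ) (x : ℕ × ℕ) : @IsCompact _ tau2 (O2 n x) := by
  have ht : Filter.Tendsto (fun k : ℕ => (x.1 + (n + 1 + k), x.2 + (n + 1 + k)))
      Filter.atTop (@nhds _ tau2 x) := by
    refine (@tendsto_nhds _ tau2 _ _ _ _).2 fun U hU hx => ?_
    obtain ⟨N, hN⟩ := (tau2_open U).1 hU x hx
    filter_upwards [Filter.eventually_ge_atTop N] with k hk
    exact hN _ (by omega)
  have := @Filter.Tendsto.isCompact_insert_range _ tau2 _ _ ht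
  convert this using 1
  ext y
  rw [mem_O2, Set.mem_insert_iff, Set.mem_range]
  refine or_congr Iff.rfl ⟨?_, ?_⟩
  · rintro ⟨k, hk, rfl⟩
    exact ⟨k - (n + 1), by rw [show n + 1 + (k - (n + 1)) = k by omega]⟩
  · rintro ⟨k, rfl⟩
    exact ⟨n + 1 + k, by omega, rfl⟩

/-- Proposition 2: `(C(p,q), τ₂)` is a non-discrete locally compact `T₁` topological
inverse semigroup: `τ₂` is non-discrete, `T₁`, locally compact, multiplication is jointly
continuous and inversion is continuous. -/
theorem stmt4 :
    tau2 ≠ ⊥ ∧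
    @T1Space (ℕ × ℕ) tau2 ∧
    @LocallyCompactSpace (ℕ × ℕ) tau2 ∧
    @Continuous ((ℕ × ℕ) × (ℕ × ℕ)) (ℕ × ℕ)
      (@instTopologicalSpaceProd (ℕ × ℕ) (ℕ × ℕ) tau2 tau2) tau2
      (fun p => bmul p.1 p.2) ∧
    @Continuous (ℕ × ℕ) (ℕ × ℕ) tau2 tau2 binv := by
  refine ⟨?_, ?_, ?_, ?_, ?_⟩
  · intro h
    have h1 : @IsOpen _ tau2 ({(0, 0)} : Set (ℕ × ℕ)) := by rw [h]; trivial
    obtain ⟨N, hN⟩ := (tau2_open _).1 h1 (0, 0) rfl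
    have := hN (N + 1) (by omega)
    simp at this
  · refine @T1Space.mk _ tau2 fun x => ?_
    refine (@isOpen_compl_iff _ _ tau2).1 ?_
    rw [tau2_open]
    intro y _
    refine ⟨x.1 + 1, fun k hk h => ?_⟩
    have := congrArg Prod.fst (Set.mem_singleton_iff.1 h)
    simp only at this
    omega
  · refine @LocallyCompactSpace.mk _ tau2 fun x s hs => ?_
    obtain ⟨U, hUs, hU, hx⟩ := (@mem_nhds_iff _ tau2 _ _).1 hs
    obtain ⟨N, hN⟩ := (tau2_open U).1 hU x hx
    refine ⟨O2 N x, @IsOpen.mem_nhds _ tau2 _ _ (O2_open N x) (Or.inl rfl), ?_, O2_compact N x⟩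
    intro y hy
    rw [mem_O2] at hy
    rcases hy with rfl | ⟨k, hk, rfl⟩
    · exact hUs hx
    · exact hUs (hN k hk.le)
  · refine (@continuous_def _ _ (@instTopologicalSpaceProd _ _ tau2 tau2) tau2 _).2 fun U hU => ?_
    refine (@isOpen_prod_iff _ _ tau2 tau2 _).2 ?_
    rintro ⟨a, b⟩ ⟨c, d⟩ hxy
    obtain ⟨N, hN⟩ := (tau2_open U).1 hU _ hxy
    refine ⟨O2 (N + a + b + c) (a, b), O2 (N + a + b + c) (c, d), O2_open _ _, O2_open _ _,
      Or.inl rfl, Or.inl rfl, ?_⟩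
    rintro ⟨u, v⟩ ⟨hu, hv⟩
    rw [mem_O2] at hu hv
    simp only at hu hv
    simp only [Set.mem_preimage, bmul] at hxy hN ⊢
    have key : ∀ s t : ℕ, (N + a + b + c < s ∨ N + a + b + c < t) →
        (a + s + (c + t - (b + s)), d + t + (b + s - (c + t))) ∈ U := by
      intro s t hst
      have := hN (a + s + (c + t - (b + s)) - (a + (c - b))) (by omega)
      convert this using 2 <;> omega
    rcases hu with rfl | ⟨s, hs, rfl⟩ <;> rcases hv with rfl | ⟨t, ht, rfl⟩
    · exact hxy
    · exact key 0 t (Or.inr ht)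
    · exact key s 0 (Or.inl hs)
    · exact key s t (Or.inl hs)
  · refine (@continuous_def _ _ tau2 tau2 _).2 fun U hU => ?_
    rw [tau2_open] at hU ⊢
    intro x hx
    exact hU (binv x) hx
end

section
/- Let τ₂ be the topology on the bicyclic monoid C(p,q) generated by taking, as a neighbourhood base at each point q^i p^j, the family of sets O_n(q^i p^j) = {q^i p^j} ∪ (↓≼ q^{i+n} p^{j+n} \ {q^{i+n} p^{j+n}}) for n ∈ ℕ. Then (C(p,q), τ₂) has no isolated points, and consequently (C(p,q), τ₂) is not a Baire space. -/
theorem mem_O2_iff (n : ℕ) (x y : ℕ × ℕ) :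
    y ∈ O2 n x ↔ y = x ∨ ∃ m, n < m ∧ y = (x.1 + m, x.2 + m) := by
  obtain ⟨a, b⟩ := x
  obtain ⟨c, d⟩ := y
  simp only [O2, bDown, bLe, bmul, Set.mem_union, Set.mem_singleton_iff, Set.mem_diff,
    Set.mem_setOf_eq, Prod.mk.injEq, Prod.exists]
  constructor
  · rintro (h | ⟨⟨e, f, ⟨h1, h2⟩, h3, h4⟩, h5⟩)
    · exact Or.inl h
    · right
      refine ⟨c - a, ?_, ?_, ?_⟩ <;> omega
  · rintro (h | ⟨m, hm, h1, h2⟩)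
    · exact Or.inl h
    · right
      refine ⟨⟨b + m, b + m, ⟨?_, ?_⟩, ?_, ?_⟩, ?_⟩ <;> omega

theorem tau2_eventually (U : Set (ℕ × ℕ)) (hU : @IsOpen (ℕ × ℕ) tau2 U) :
    ∀ x ∈ U, ∃ N : ℕ, ∀ m, N ≤ m → (x.1 + m, x.2 + m) ∈ U := by
  change TopologicalSpace.GenerateOpen _ U at hU
  induction hU with
  | basic s hs =>
    obtain ⟨y, n, rfl⟩ := hs
    intro x hx
    refine ⟨n + 1, fun m hm => ?_⟩
    rw [mem_O2_iff] at hx ⊢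
    right
    rcases hx with rfl | ⟨k, hk, rfl⟩
    · exact ⟨m, by omega, rfl⟩
    · exact ⟨k + m, by omega, by simp only [Prod.mk.injEq]; omega⟩
  | univ => intro x _; exact ⟨0, fun _ _ => trivial⟩
  | inter s t _ _ ihs iht =>
    intro x hx
    obtain ⟨N, hN⟩ := ihs x hx.1
    obtain ⟨M, hM⟩ := iht x hx.2
    exact ⟨max N M, fun m hm => ⟨hN m (by omega), hM m (by omega)⟩⟩
  | sUnion S _ ih =>
    rintro x ⟨s, hs, hx⟩
    obtain ⟨N, hN⟩ := ih s hs x hx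
    exact ⟨N, fun m hm => ⟨s, hs, hN m hm⟩⟩

/-- Remark 1: `(C(p,q), τ₂)` has no isolated points and is not a Baire space. -/
theorem stmt6 :
    (∀ x : ℕ × ℕ, ¬ @IsOpen (ℕ × ℕ) tau2 {x}) ∧
    ¬ @BaireSpace (ℕ × ℕ) tau2 := by
  have key : ∀ x : ℕ × ℕ, ¬ @IsOpen (ℕ × ℕ) tau2 {x} := by
    intro x hx
    obtain ⟨N, hN⟩ := tau2_eventually _ hx x rfl
    have h := congrArg Prod.fst (hN (N + 1) (by omega))
    simp at h
  refine ⟨key, fun hB => ?_⟩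
  letI := tau2
  have hopen : ∀ x : ℕ × ℕ, IsOpen ({x}ᶜ : Set (ℕ × ℕ)) := by
    intro x
    rw [isOpen_iff_forall_mem_open]
    intro y hy
    refine ⟨O2 x.1 y, ?_, TopologicalSpace.isOpen_generateFrom_of_mem ⟨y, x.1, rfl⟩,
      (mem_O2_iff _ _ _).2 (Or.inl rfl)⟩
    intro z hz hzx
    rw [Set.mem_singleton_iff] at hzx
    subst hzx
    rcases (mem_O2_iff _ _ _).1 hz with h | ⟨m, hm, h⟩
    · exact hy h.symm
    · have := congrArg Prod.fst h
      simp only at this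
      omega
  have hdense : ∀ x : ℕ × ℕ, Dense ({x}ᶜ : Set (ℕ × ℕ)) := by
    intro x
    rw [dense_compl_singleton_iff_not_open]
    exact key x
  have h := (dense_iInter_of_isOpen hopen hdense).nonempty
  obtain ⟨y, hy⟩ := h
  exact Set.mem_iInter.1 hy y rfl
end

section
/- Let τ_c be the topology on the bicyclic monoid C(p,q) generated by taking, as a neighbourhood base at each point q^i p^j, the family of sets W_n(q^i p^j) = {q^i p^j} ∪ (C(p,q) \ C_n) for n ∈ ℕ, where C_n = {q^s p^t : s ≤ n and t ≤ n}. Then τ_c is a compact T₁ topology on C(p,q) for which all left translations x ↦ a·x, all right translations x ↦ x·a, and the inversion x ↦ x^{-1} are continuous. -/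
/-- `C_n = {q^s p^t : s ≤ n, t ≤ n}`. -/
def Cset (n : ℕ) : Set (ℕ × ℕ) := {y | y.1 ≤ n ∧ y.2 ≤ n}

/-- `W_n(q^i p^j) = {q^i p^j} ∪ (C(p,q) \ C_n)`. -/
def Wc (n : ℕ) (x : ℕ × ℕ) : Set (ℕ × ℕ) := {x} ∪ (Set.univ \ Cset n)

/-- The topology `τ_c` on the bicyclic monoid generated by the sets `W_n(q^i p^j)`
as a neighbourhood base at each point `q^i p^j`. -/
def tauc : TopologicalSpace (ℕ × ℕ) :=
  TopologicalSpace.generateFrom {S | ∃ x : ℕ × ℕ, ∃ n : ℕ, S = Wc n x}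

theorem cset_fin (n : ℕ) : (Cset n).Finite := by
  apply Set.Finite.subset ((Set.finite_Iic n).prod (Set.finite_Iic n))
  rintro ⟨a, b⟩ h
  exact h

theorem fin_sub_cset {s : Set (ℕ × ℕ)} (hs : s.Finite) : ∃ n, s ⊆ Cset n := by
  obtain ⟨⟨a, b⟩, h⟩ := hs.bddAbove
  refine ⟨max a b, ?_⟩
  rintro ⟨x, y⟩ hx
  have := h hx
  simp only [Prod.mk_le_mk] at this
  simp only [Cset, Set.mem_setOf_eq]
  omega

theorem open_of_fin {s : Set (ℕ × ℕ)} (hs : sᶜ.Finite) : @IsOpen _ tauc s := by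
  letI := tauc
  obtain ⟨n, hn⟩ := fin_sub_cset hs
  have : s = ⋃ x ∈ s, Wc n x := by
    ext y
    simp only [Set.mem_iUnion, Wc]
    constructor
    · intro hy
      exact ⟨y, hy, Or.inl rfl⟩
    · rintro ⟨x, hx, h | h⟩
      · rw [Set.mem_singleton_iff] at h
        rwa [h]
      · by_contra hy
        exact h.2 (hn hy)
  rw [this]
  exact isOpen_biUnion fun x _ => TopologicalSpace.isOpen_generateFrom_of_mem ⟨x, n, rfl⟩

theorem fin_of_open {s : Set (ℕ × ℕ)} (hs : @IsOpen _ tauc s) : s = ∅ ∨ sᶜ.Finite := by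
  have hs' : TopologicalSpace.GenerateOpen {S | ∃ x : ℕ × ℕ, ∃ n : ℕ, S = Wc n x} s := hs
  clear hs
  induction hs' with
  | basic s h =>
    obtain ⟨x, n, rfl⟩ := h
    right
    apply (cset_fin n).subset
    intro y hy
    by_contra h
    exact hy (Or.inr ⟨trivial, h⟩)
  | univ => right; simp
  | inter s t _ _ ih1 ih2 =>
    rcases ih1 with rfl | h
    · left; simp
    rcases ih2 with rfl | h'
    · left; simp
    right
    rw [Set.compl_inter]
    exact h.union h'
  | sUnion S _ ih =>
    by_cases hS : ∃ t ∈ S, tᶜ.Finite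
    · obtain ⟨t, ht, hf⟩ := hS
      right
      exact hf.subset (Set.compl_subset_compl.2 (Set.subset_sUnion_of_mem ht))
    · left
      push Not at hS
      rw [Set.sUnion_eq_empty]
      intro t ht
      exact (ih t ht).resolve_right (hS t ht)

theorem cont_of_fin {f : ℕ × ℕ → ℕ × ℕ}
    (hf : ∀ n, ∃ m, ∀ x, f x ∈ Cset n → x ∈ Cset m) : @Continuous _ _ tauc tauc f := by
  letI := tauc
  refine continuous_def.2 fun s hs => ?_
  rcases fin_of_open hs with rfl | h
  · simp
  · apply open_of_fin
    obtain ⟨n, hn⟩ := fin_sub_cset h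
    obtain ⟨m, hm⟩ := hf n
    exact (cset_fin m).subset fun x hx => hm x (hn hx)

/-- Proposition 3: `τ_c` is a compact `T₁` topology on `C(p,q)` for which all left and
right translations and the inversion are continuous. -/
theorem stmt7 :
    @CompactSpace (ℕ × ℕ) tauc ∧
    @T1Space (ℕ × ℕ) tauc ∧
    (∀ a : ℕ × ℕ, @Continuous (ℕ × ℕ) (ℕ × ℕ) tauc tauc (fun x => bmul a x)) ∧
    (∀ a : ℕ × ℕ, @Continuous (ℕ × ℕ) (ℕ × ℕ) tauc tauc (fun x => bmul x a)) ∧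
    @Continuous (ℕ × ℕ) (ℕ × ℕ) tauc tauc binv := by
  letI := tauc
  refine ⟨⟨?_⟩, ⟨fun x => ?_⟩, fun a => cont_of_fin fun n => ⟨n + a.1 + a.2, fun x h => ?_⟩,
    fun a => cont_of_fin fun n => ⟨n + a.1 + a.2, fun x h => ?_⟩,
    cont_of_fin fun n => ⟨n, fun x h => ⟨h.2, h.1⟩⟩⟩
  · refine isCompact_of_finite_subcover fun {ι} U hU hc => ?_
    obtain ⟨i, hi⟩ := Set.mem_iUnion.1 (hc (Set.mem_univ (0, 0)))
    have hf : (U i)ᶜ.Finite := (fin_of_open (hU i)).resolve_left fun h => by simp [h] at hi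
    obtain ⟨t, ht⟩ := hf.isCompact.elim_finite_subcover U hU ((Set.subset_univ _).trans hc)
    classical
    refine ⟨insert i t, fun x _ => ?_⟩
    by_cases hx : x ∈ U i
    · exact Set.mem_biUnion (Finset.mem_insert_self i t) hx
    · obtain ⟨j, hj, hxj⟩ := Set.mem_iUnion₂.1 (ht hx)
      exact Set.mem_biUnion (Finset.mem_insert_of_mem hj) hxj
  · exact ⟨open_of_fin (by simp)⟩
  · simp only [Cset, bmul, Set.mem_setOf_eq] at h ⊢
    omega
  · simp only [Cset, bmul, Set.mem_setOf_eq] at h ⊢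
    omega
end

section
/- Every shift-continuous Baire T₁ topology τ on the bicyclic monoid C(p,q) is discrete; that is, if τ is a T₁ topology on C(p,q) such that (C(p,q), τ) is a Baire space and all left and right translations x ↦ a·x and x ↦ x·a are continuous, then τ is the discrete topology. -/
/-- Theorem 1: every shift-continuous Baire `T₁` topology on the bicyclic monoid is
discrete. -/
theorem stmt9 (τ : TopologicalSpace (ℕ × ℕ))
    (hT1 : @T1Space (ℕ × ℕ) τ)
    (hBaire : @BaireSpace (ℕ × ℕ) τ)
    (hleft : ∀ a : ℕ × ℕ, @Continuous (ℕ × ℕ) (ℕ × ℕ) τ τ (fun x => bmul a x))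
    (hright : ∀ a : ℕ × ℕ, @Continuous (ℕ × ℕ) (ℕ × ℕ) τ τ (fun x => bmul x a)) :
    τ = ⊥ := by
  have h1 : ∃ x : ℕ × ℕ, @IsOpen _ τ {x} := by
    obtain ⟨x, hx⟩ := @nonempty_interior_of_iUnion_of_closed (ℕ × ℕ) (ℕ × ℕ) τ hBaire _ _
      (fun x => {x}) (fun x => @isClosed_singleton _ τ hT1 x) (by ext; simp)
    refine ⟨x, ?_⟩
    obtain ⟨y, hy⟩ := hx
    have hs := @interior_subset _ τ {x}
    have h := @isOpen_interior _ τ {x}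
    have hyx : y = x := hs hy
    subst hyx
    rwa [Set.Subset.antisymm hs (Set.singleton_subset_iff.2 hy)] at h
  obtain ⟨⟨k, l⟩, hkl⟩ := h1
  have h0 : @IsOpen _ τ {((0, 0) : ℕ × ℕ)} := by
    have h := @IsOpen.preimage _ _ τ τ _ (hleft (k, 0)) _
      (@IsOpen.preimage _ _ τ τ _ (hright (0, l)) _ hkl)
    convert h using 1
    ext ⟨m, n⟩
    simp only [bmul, Set.mem_singleton_iff, Set.mem_preimage, Prod.mk.injEq]
    omega
  refine eq_bot_of_singletons_open ?_
  rintro ⟨k, l⟩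
  have h := @IsOpen.preimage _ _ τ τ _ (hleft (0, k)) _
      (@IsOpen.preimage _ _ τ τ _ (hright (l, 0)) _ h0)
  set U := (fun x => bmul (0, k) x) ⁻¹' ((fun x => bmul x (l, 0)) ⁻¹' {((0, 0) : ℕ × ℕ)}) with hU
  have hmem : ∀ m n, (m, n) ∈ U → m ≤ k ∧ n ≤ l := by
    intro m n hmn
    simp only [hU, bmul, Set.mem_singleton_iff, Set.mem_preimage, Prod.mk.injEq] at hmn
    omega
  have hin : (k, l) ∈ U := by
    simp [hU, bmul]
  have hfin : U.Finite := by
    refine (Set.finite_Iic ((k, l) : ℕ × ℕ)).subset ?_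
    rintro ⟨m, n⟩ hmn
    exact hmem m n hmn
  have hcl : @IsClosed _ τ (U \ {(k, l)}) := @Set.Finite.isClosed _ τ hT1 _ (hfin.subset Set.sdiff_subset)
  have ho := @IsOpen.sdiff _ _ _ τ h hcl
  rwa [Set.diff_diff_cancel_left (Set.singleton_subset_iff.2 hin)] at ho
end

section
/- Let τ be a shift-continuous T₁ topology on the bicyclic monoid C(p,q) such that the maps C(p,q) → E(C(p,q)), x ↦ x·x^{-1} and x ↦ x^{-1}·x are continuous. If for some idempotent q^i p^i there exists an open neighbourhood U(q^i p^i) of q^i p^i in (C(p,q), τ) such that the set U(q^i p^i) ∩ E(C(p,q)) is finite, then τ is the discrete topology. -/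
/-- The set of idempotents `E(C(p,q)) = {q^i p^i : i ∈ ℕ}`. -/
def bE : Set (ℕ × ℕ) := {x | bmul x x = x}

lemma bmul_binv_mem (x : ℕ × ℕ) : bmul x (binv x) ∈ bE := by
  obtain ⟨k, l⟩ := x
  simp [bE, bmul, binv]

lemma binv_bmul_mem (x : ℕ × ℕ) : bmul (binv x) x ∈ bE := by
  obtain ⟨k, l⟩ := x
  simp [bE, bmul, binv]

lemma idem_mem (i : ℕ) : ((i, i) : ℕ × ℕ) ∈ bE := by
  simp [bE, bmul]

/-- The subspace topology on a subset `Y` of the bicyclic monoid. -/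
def subT (τ : TopologicalSpace (ℕ × ℕ)) (Y : Set (ℕ × ℕ)) : TopologicalSpace Y :=
  TopologicalSpace.induced Subtype.val τ

lemma aux_isolated {X : Type*} [TopologicalSpace X] [T1Space X] (S : Set X) (hS : IsOpen S)
    (hf : S.Finite) (x : X) (hx : x ∈ S) : IsOpen ({x} : Set X) := by
  have h1 : IsOpen (S \ (S \ {x})) :=
    hS.sdiff (hf.subset Set.diff_subset).isClosed
  have h2 : S \ (S \ {x}) = {x} := by
    ext y
    simp only [Set.mem_diff, Set.mem_singleton_iff, not_and, not_not]
    constructor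
    · rintro ⟨h, h'⟩
      exact h' h
    · rintro rfl
      exact ⟨hx, fun _ => rfl⟩
  rwa [h2] at h1

/-- Lemma 3: let `τ` be a shift-continuous `T₁` topology on `C(p,q)` such that the maps
`x ↦ x·x⁻¹` and `x ↦ x⁻¹·x` into `E(C(p,q))` are continuous. If some idempotent `q^i p^i`
has an open neighbourhood `U` with `U ∩ E(C(p,q))` finite, then `τ` is discrete. -/
theorem stmt10 (τ : TopologicalSpace (ℕ × ℕ))
    (hT1 : @T1Space (ℕ × ℕ) τ)
    (hleft : ∀ a : ℕ × ℕ, @Continuous (ℕ × ℕ) (ℕ × ℕ) τ τ (fun x => bmul a x))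
    (hright : ∀ a : ℕ × ℕ, @Continuous (ℕ × ℕ) (ℕ × ℕ) τ τ (fun x => bmul x a))
    (hmi : @Continuous (ℕ × ℕ) bE τ (subT τ bE)
      (fun x => ⟨bmul x (binv x), bmul_binv_mem x⟩))
    (him : @Continuous (ℕ × ℕ) bE τ (subT τ bE)
      (fun x => ⟨bmul (binv x) x, binv_bmul_mem x⟩))
    (i : ℕ) (U : Set (ℕ × ℕ)) (hU : @IsOpen (ℕ × ℕ) τ U) (hiU : ((i, i) : ℕ × ℕ) ∈ U)
    (hfin : (U ∩ bE).Finite) :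
    τ = ⊥ := by
  letI := τ
  haveI := hT1
  have c1 : Continuous (fun x : ℕ × ℕ => ((x.1, x.1) : ℕ × ℕ)) := by
    have h := (@continuous_induced_dom bE (ℕ × ℕ) Subtype.val τ)
    have h2 := @Continuous.comp _ _ _ τ (subT τ bE) τ _ _ h hmi
    convert h2 using 1
    ext x <;> simp [bmul, binv]
  have c2 : Continuous (fun x : ℕ × ℕ => ((x.2, x.2) : ℕ × ℕ)) := by
    have h := (@continuous_induced_dom bE (ℕ × ℕ) Subtype.val τ)
    have h2 := @Continuous.comp _ _ _ τ (subT τ bE) τ _ _ h him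
    convert h2 using 1
    ext x <;> simp [bmul, binv]
  have hV := (hU.preimage c1).inter (hU.preimage c2)
  have hi : IsOpen ({(i, i)} : Set (ℕ × ℕ)) := by
    refine aux_isolated _ hV ?_ _ ⟨hiU, hiU⟩
    refine ((hfin.image Prod.fst).prod (hfin.image Prod.fst)).subset ?_
    rintro ⟨a, b⟩ ⟨ha, hb⟩
    exact ⟨⟨(a, a), ⟨ha, idem_mem a⟩, rfl⟩, ⟨(b, b), ⟨hb, idem_mem b⟩, rfl⟩⟩
  refine eq_bot_of_singletons_open fun x => ?_
  obtain ⟨m, n⟩ := x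
  have hc : Continuous (fun x => bmul (bmul (i, m) x) (n, i)) :=
    (hright (n, i)).comp (hleft (i, m))
  refine aux_isolated _ (hi.preimage hc) ?_ _ ?_
  · refine ((Set.finite_Iic m).prod (Set.finite_Iic n)).subset ?_
    rintro ⟨a, b⟩ h
    simp only [bmul, Set.mem_preimage, Set.mem_singleton_iff, Prod.mk.injEq] at h
    simp only [Set.mem_prod, Set.mem_Iic]
    omega
  · simp [bmul]
end

section
/- Let τ be a shift-continuous T₁ topology on the bicyclic monoid C(p,q). If there exists a point q^i p^j ∈ C(p,q) such that the subspace ↓≼ q^i p^j is quasi-regular at q^i p^j, then for every point q^m p^n ∈ C(p,q) the subspace ↓≼ q^m p^n is quasi-regular at q^m p^n. -/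
lemma self_mem_bDown (i j : ℕ) : ((i, j) : ℕ × ℕ) ∈ bDown (i, j) :=
  ⟨(j, j), by simp [bmul], by simp [bmul]⟩

/-- A space is quasi-regular at a point `x` if every open neighbourhood `U` of `x`
contains the closure of some nonempty open set. -/
def QuasiRegularAt {X : Type*} (t : TopologicalSpace X) (x : X) : Prop :=
  ∀ U : Set X, @IsOpen X t U → x ∈ U →
    ∃ V : Set X, V.Nonempty ∧ @IsOpen X t V ∧ @closure X t V ⊆ U

lemma mem_bDown_iff (i j : ℕ) (x : ℕ × ℕ) : x ∈ bDown (i, j) ↔ ∃ k, x = (i + k, j + k) := by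
  constructor
  · rintro ⟨⟨a, b⟩, he, rfl⟩
    simp only [bmul, Prod.mk.injEq] at he
    refine ⟨a - j, ?_⟩
    obtain ⟨h1, h2⟩ := he
    have h3 : b = a := by omega
    subst h3
    refine Prod.ext rfl ?_
    change b + (j - b) = j + (b - j)
    omega
  · rintro ⟨k, rfl⟩
    refine ⟨(j + k, j + k), by simp [bmul], ?_⟩
    simp [bmul]

lemma shift_eq (i j m n k : ℕ) :
    bmul (bmul (m, i) (i + k, j + k)) (j, n) = (m + k, n + k) := by
  simp only [bmul, Prod.mk.injEq]
  omega

lemma quasi_transfer {X Y : Type*} (t : TopologicalSpace X) (s : TopologicalSpace Y)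
    (g : X → Y) (f : Y → X) (hg : Continuous g) (hf : Continuous f)
    (hfg : ∀ x, f (g x) = x) (hgf : ∀ y, g (f y) = y) (x : X)
    (h : QuasiRegularAt t x) : QuasiRegularAt s (g x) := by
  intro U hU hx
  obtain ⟨V, ⟨v, hv⟩, hVo, hVc⟩ := h (g ⁻¹' U) (hU.preimage hg) hx
  refine ⟨f ⁻¹' V, ⟨g v, by simpa [hfg] using hv⟩, hVo.preimage hf, fun y hy => ?_⟩
  have h1 : f y ∈ g ⁻¹' U := hVc (hf.closure_preimage_subset V hy)
  simpa [hgf] using h1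

/-- The two-sided shift between principal down-sets. -/
def shiftMap (i j m n : ℕ) (x : bDown (i, j)) : bDown (m, n) :=
  ⟨bmul (bmul (m, i) x.1) (j, n), by
    obtain ⟨k, hk⟩ := (mem_bDown_iff i j x.1).1 x.2
    rw [hk, shift_eq]
    exact (mem_bDown_iff _ _ _).2 ⟨k, rfl⟩⟩

lemma shiftMap_inv (i j m n : ℕ) (x : bDown (i, j)) :
    shiftMap m n i j (shiftMap i j m n x) = x := by
  obtain ⟨x, hx⟩ := x
  obtain ⟨k, rfl⟩ := (mem_bDown_iff i j x).1 hx
  simp only [shiftMap, shift_eq]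

lemma shiftMap_cont (τ : TopologicalSpace (ℕ × ℕ))
    (hleft : ∀ a : ℕ × ℕ, @Continuous (ℕ × ℕ) (ℕ × ℕ) τ τ (fun x => bmul a x))
    (hright : ∀ a : ℕ × ℕ, @Continuous (ℕ × ℕ) (ℕ × ℕ) τ τ (fun x => bmul x a))
    (i j m n : ℕ) :
    @Continuous _ _ (subT τ (bDown (i, j))) (subT τ (bDown (m, n))) (shiftMap i j m n) := by
  refine continuous_induced_rng.2 ?_
  have h0 : @Continuous _ _ (subT τ (bDown (i, j))) τ Subtype.val := continuous_induced_dom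
  exact @Continuous.comp _ _ _ (subT τ (bDown (i, j))) τ τ _ _ (hright (j, n))
    (@Continuous.comp _ _ _ (subT τ (bDown (i, j))) τ τ _ _ (hleft (m, i)) h0)

/-- Lemma 4: let `τ` be a shift-continuous `T₁` topology on `C(p,q)`. If the subspace
`↓≼ q^i p^j` is quasi-regular at `q^i p^j` for some point `q^i p^j`, then for every point
`q^m p^n` the subspace `↓≼ q^m p^n` is quasi-regular at `q^m p^n`. -/
theorem stmt11 (τ : TopologicalSpace (ℕ × ℕ))
    (hT1 : @T1Space (ℕ × ℕ) τ)
    (hleft : ∀ a : ℕ × ℕ, @Continuous (ℕ × ℕ) (ℕ × ℕ) τ τ (fun x => bmul a x))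
    (hright : ∀ a : ℕ × ℕ, @Continuous (ℕ × ℕ) (ℕ × ℕ) τ τ (fun x => bmul x a))
    (i j : ℕ)
    (hqr : QuasiRegularAt (subT τ (bDown (i, j))) ⟨(i, j), self_mem_bDown i j⟩) :
    ∀ m n : ℕ, QuasiRegularAt (subT τ (bDown (m, n))) ⟨(m, n), self_mem_bDown m n⟩ := by
  intro m n
  have h := quasi_transfer (subT τ (bDown (i, j))) (subT τ (bDown (m, n)))
    (shiftMap i j m n) (shiftMap m n i j)
    (shiftMap_cont τ hleft hright i j m n) (shiftMap_cont τ hleft hright m n i j)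
    (shiftMap_inv i j m n) (shiftMap_inv m n i j) _ hqr
  have e : shiftMap i j m n ⟨(i, j), self_mem_bDown i j⟩ = ⟨(m, n), self_mem_bDown m n⟩ :=
    Subtype.ext (shift_eq i j m n 0)
  rwa [e] at h
end

section
/- Let τ be an inverse semigroup T₁ topology on the bicyclic monoid C(p,q), i.e., a T₁ topology for which multiplication is jointly continuous and inversion is continuous. If there exists an idempotent q^i p^i ∈ C(p,q) such that the subspace E(C(p,q)) of idempotents is quasi-regular at q^i p^i, then τ is the discrete topology. -/
lemma nat_aux [t : TopologicalSpace ℕ] [T1Space ℕ]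
    (hmax : ∀ b : ℕ, Continuous (fun x : ℕ => max x b))
    (hs : Continuous (fun n : ℕ => n + 1)) (hp : Continuous (fun n : ℕ => n - 1))
    (i : ℕ)
    (hq : ∀ U : Set ℕ, IsOpen U → i ∈ U → ∃ V : Set ℕ, V.Nonempty ∧ IsOpen V ∧ closure V ⊆ U) :
    ∀ n : ℕ, IsOpen ({n} : Set ℕ) := by
  have up : ∀ a : ℕ, IsOpen ({a} : Set ℕ) → IsOpen ({a + 1} : Set ℕ) := by
    intro a ha
    have h1 : IsOpen ({0}ᶜ : Set ℕ) := isOpen_compl_singleton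
    have h2 := (ha.preimage hp).inter h1
    convert h2 using 1
    ext x
    simp
    omega
  have down : ∀ a : ℕ, IsOpen ({a + 1} : Set ℕ) → IsOpen ({a} : Set ℕ) := by
    intro a ha
    have h2 := ha.preimage hs
    convert h2 using 1
    ext x
    simp
  have to0 : ∀ a : ℕ, IsOpen ({a} : Set ℕ) → IsOpen ({0} : Set ℕ) := by
    intro a
    induction a with
    | zero => exact id
    | succ a ih => exact fun h => ih (down a h)
  by_contra hne
  have hno : ∀ a : ℕ, ¬ IsOpen ({a} : Set ℕ) := by
    intro a ha
    apply hne
    intro n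
    induction n with
    | zero => exact to0 a ha
    | succ n ih => exact up n ih
  have hinf : ∀ V : Set ℕ, V.Nonempty → IsOpen V → V.Infinite := by
    rintro V ⟨v, hv⟩ hV hfin
    apply hno v
    have h1 : IsOpen ((V \ {v})ᶜ : Set ℕ) := (hfin.subset Set.diff_subset).isClosed.isOpen_compl
    have h2 := hV.inter h1
    convert h2 using 1
    ext x
    simp only [Set.mem_singleton_iff, Set.mem_inter_iff, Set.mem_compl_iff, Set.mem_diff]
    constructor
    · rintro rfl
      exact ⟨hv, by simp⟩
    · rintro ⟨h3, h4⟩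
      by_contra h5
      exact h4 ⟨h3, h5⟩
  -- closures contain tails
  have htail : ∀ (V : Set ℕ) (a b : ℕ), IsOpen V → a ∈ V → a ≤ b → b ∈ closure V := by
    intro V a b hV ha hab
    rw [mem_closure_iff]
    intro U hU hb
    have h1 : Continuous (fun x : ℕ => max x b) := hmax b
    have h2 : IsOpen ((fun x : ℕ => max x b) ⁻¹' U ∩ V) := (hU.preimage h1).inter hV
    have h3 : a ∈ (fun x : ℕ => max x b) ⁻¹' U ∩ V := by
      refine ⟨?_, ha⟩
      simpa [max_eq_right hab] using hb
    obtain ⟨x, hx, hxb⟩ := (hinf _ ⟨a, h3⟩ h2).exists_gt b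
    refine ⟨x, ?_, hx.2⟩
    have := hx.1
    simpa [max_eq_left hxb.le] using this
  have hcof : ∀ U : Set ℕ, IsOpen U → i ∈ U → ∃ N, ∀ x, N ≤ x → x ∈ U := by
    intro U hU hi
    obtain ⟨V, ⟨a, ha⟩, hV, hc⟩ := hq U hU hi
    exact ⟨a, fun x hx => hc (htail V a x hV ha hx)⟩
  obtain ⟨V, hVn, hV, hc⟩ := hq ({i + 1}ᶜ) isOpen_compl_singleton (by simp)
  have : i + 1 ∈ closure V := by
    rw [mem_closure_iff]
    intro O hO hi
    obtain ⟨N, hN⟩ := hcof _ (hO.preimage hs) hi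
    obtain ⟨x, hx, hxb⟩ := (hinf V hVn hV).exists_gt (N + 1)
    refine ⟨x, ?_, hx⟩
    have := hN (x - 1) (by omega)
    have h2 : x - 1 + 1 = x := by omega
    simpa [h2] using this
  exact hc this rfl

lemma bE_eq (x : ℕ × ℕ) (hx : x ∈ bE) : (x.1, x.1) = x := by
  obtain ⟨a, b⟩ := x
  simp only [bE, bmul, Set.mem_setOf_eq, Prod.mk.injEq] at hx
  ext <;> simp
  omega

/-- Proposition 4: let `τ` be an inverse semigroup `T₁` topology on `C(p,q)` (i.e. the
multiplication is jointly continuous and the inversion is continuous). If the subspace of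
idempotents `E(C(p,q))` is quasi-regular at some idempotent `q^i p^i`, then `τ` is
discrete. -/
theorem stmt13 (τ : TopologicalSpace (ℕ × ℕ))
    (hT1 : @T1Space (ℕ × ℕ) τ)
    (hmul : @Continuous ((ℕ × ℕ) × (ℕ × ℕ)) (ℕ × ℕ)
      (@instTopologicalSpaceProd (ℕ × ℕ) (ℕ × ℕ) τ τ) τ (fun p => bmul p.1 p.2))
    (hinv : @Continuous (ℕ × ℕ) (ℕ × ℕ) τ τ binv)
    (i : ℕ)
    (hqr : QuasiRegularAt (subT τ bE) ⟨(i, i), idem_mem i⟩) :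
    τ = ⊥ := by
  have hcm : ∀ g h : ℕ × ℕ → ℕ × ℕ, Continuous g → Continuous h →
      Continuous (fun x => bmul (g x) (h x)) := fun g h hg hh =>
    hmul.comp (hg.prodMk hh)
  let f : ℕ → ℕ × ℕ := fun n => (n, n)
  have hfi : Function.Injective f := fun a b h => congrArg Prod.fst h
  letI σ : TopologicalSpace ℕ := TopologicalSpace.induced f τ
  have hf : @Continuous ℕ (ℕ × ℕ) σ τ f := continuous_induced_dom
  have hT : @T1Space ℕ σ := by
    refine ⟨fun x => ?_⟩
    have h := (@isClosed_singleton _ τ hT1 (f x)).preimage hf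
    convert h using 1
    ext y
    simp [f]
  have hmax : ∀ b : ℕ, @Continuous ℕ ℕ σ σ (fun x : ℕ => max x b) := by
    intro b
    rw [continuous_induced_rng]
    have h := (hcm id (fun _ => f b) continuous_id continuous_const).comp hf
    convert h using 1
    funext x
    simp only [f, bmul, Function.comp, id, Prod.mk.injEq]
    omega
  have hs : @Continuous ℕ ℕ σ σ (fun x : ℕ => x + 1) := by
    rw [continuous_induced_rng]
    have h := (hcm _ (fun _ => (0, 1)) (hcm (fun _ => (1, 0)) id continuous_const continuous_id)
      continuous_const).comp hf
    convert h using 1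
    funext x
    simp only [f, bmul, Function.comp, id, Prod.mk.injEq]
    omega
  have hp : @Continuous ℕ ℕ σ σ (fun x : ℕ => x - 1) := by
    rw [continuous_induced_rng]
    have h := (hcm _ (fun _ => (1, 0)) (hcm (fun _ => (0, 1)) id continuous_const continuous_id)
      continuous_const).comp hf
    convert h using 1
    funext x
    simp only [f, bmul, Function.comp, id, Prod.mk.injEq]
    omega
  have hdisc := @nat_aux σ hT hmax hs hp i (by
    intro U hU hi
    letI ρ : TopologicalSpace bE := subT τ bE
    have hval : @Continuous bE (ℕ × ℕ) ρ τ Subtype.val := continuous_induced_dom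
    have h1 : @Continuous bE ℕ ρ σ (fun x => x.1.1) := by
      rw [continuous_induced_rng]
      convert hval using 1
      funext x
      exact bE_eq x.1 x.2
    have h2 : @Continuous ℕ bE σ ρ (fun n => ⟨(n, n), idem_mem n⟩) :=
      continuous_induced_rng.mpr hf
    obtain ⟨V, ⟨v, hv⟩, hV, hc⟩ := hqr _ (hU.preimage h1) hi
    refine ⟨_, ⟨v.1.1, ?_⟩, hV.preimage h2, ?_⟩
    · have : (⟨(v.1.1, v.1.1), idem_mem v.1.1⟩ : bE) = v := Subtype.ext (bE_eq v.1 v.2)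
      simpa [this] using hv
    · intro x hx
      exact hc (h2.closure_preimage_subset V hx))
  have hl : @Continuous (ℕ × ℕ) ℕ τ σ Prod.fst := by
    rw [continuous_induced_rng]
    have h := hcm id binv continuous_id hinv
    convert h using 1
    funext x
    simp [f, bmul, binv]
  have hr : @Continuous (ℕ × ℕ) ℕ τ σ Prod.snd := by
    rw [continuous_induced_rng]
    have h := hcm binv id hinv continuous_id
    convert h using 1
    funext x
    simp [f, bmul, binv]
  have hsing : ∀ x : ℕ × ℕ, @IsOpen _ τ {x} := by
    intro x
    have h := ((hdisc x.1).preimage hl).inter ((hdisc x.2).preimage hr)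
    convert h using 1
    ext y
    simp [Prod.ext_iff]
  exact (discreteTopology_iff_isOpen_singleton.mpr hsing).eq_bot
end

section
/- Let τ be an inverse semigroup T₁ topology on the bicyclic monoid C(p,q), i.e., a T₁ topology for which multiplication is jointly continuous and inversion is continuous. If there exists a point q^i p^j ∈ C(p,q) such that the subspace ↓≼ q^i p^j is quasi-regular at q^i p^j, then τ is the discrete topology. -/
def BB : Type := ℕ × ℕ
def bm (x y : BB) : BB := bmul x y
def bi (x : BB) : BB := binv x
def NN : Type := ℕ
def dg (n : NN) : BB := ((show ℕ from n), (show ℕ from n))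

/-- On a nondiscrete max-semilattice, quasi-regularity at a point gives an isolated point. -/
lemma exists_isolated {N : Type*} [LinearOrder N] [TopologicalSpace N] [T1Space N]
    (hfin : ∀ n : N, (Set.Iic n).Finite) (o a : N) (hoa : o ≠ a)
    (hmax : Continuous fun p : N × N => max p.1 p.2)
    (hq : ∀ U : Set N, IsOpen U → o ∈ U → ∃ V : Set N, V.Nonempty ∧ IsOpen V ∧ closure V ⊆ U) :
    ∃ x : N, IsOpen ({x} : Set N) := by
  have key : ∀ S : Set N, IsOpen S → S.Nonempty → S.Finite → ∃ x : N, IsOpen ({x} : Set N) := by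
    rintro S hS ⟨x, hx⟩ hf
    refine ⟨x, ?_⟩
    have h2 : IsOpen (S \ (S \ {x})) := hS.sdiff (hf.subset Set.sdiff_subset).isClosed
    have h3 : S \ (S \ {x}) = {x} := by
      ext y
      simp only [Set.mem_sdiff, Set.mem_singleton_iff]
      constructor
      · rintro ⟨h, h'⟩
        by_contra hh
        exact h' ⟨h, hh⟩
      · rintro rfl
        exact ⟨hx, fun h => h.2 rfl⟩
    rwa [h3] at h2
  obtain ⟨V, hVne, hV, hcl⟩ := hq {a}ᶜ isOpen_compl_singleton hoa
  by_cases hf : V.Finite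
  · exact key V hV hVne hf
  have hv : ∃ v ∈ V, a ≤ v := by
    by_contra! h
    exact hf ((hfin a).subset fun x hx => (h x hx).le)
  obtain ⟨v, hvV, hav⟩ := hv
  have hop : IsOpen ((fun p : N × N => max p.1 p.2) ⁻¹' V) := hV.preimage hmax
  obtain ⟨W', V', hW', hV', haW, hvV', hsub⟩ := isOpen_prod_iff.1 hop a v
    (by simpa [max_eq_right hav] using hvV)
  have hac : a ∈ (closure V)ᶜ := fun h => hcl h rfl
  refine key (W' ∩ (closure V)ᶜ) (hW'.inter isClosed_closure.isOpen_compl) ⟨a, haW, hac⟩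
    ((hfin v).subset ?_)
  rintro w ⟨hw, hwc⟩
  by_contra hlt
  have hlt' : v ≤ w := (not_le.1 hlt).le
  have := hsub (Set.mk_mem_prod hw hvV')
  simp only [Set.mem_preimage, max_eq_left hlt'] at this
  exact hwc (subset_closure this)

lemma mem_down (i j : ℕ) (x : ℕ × ℕ) : x ∈ bDown (i, j) ↔ ∃ n, x = (i + n, j + n) := by
  constructor
  · rintro ⟨⟨a, b⟩, he, hx⟩
    simp only [bmul, Prod.mk.injEq] at he
    refine ⟨b - j, ?_⟩
    rw [hx]
    simp only [bmul, Prod.mk.injEq]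
    omega
  · rintro ⟨n, rfl⟩
    refine ⟨(j + n, j + n), ?_, ?_⟩ <;> simp only [bmul, Prod.mk.injEq] <;> omega

lemma main_aux [t : TopologicalSpace BB] [T1Space BB]
    (hmul : Continuous fun p : BB × BB => bm p.1 p.2)
    (hinv : Continuous (fun x : BB => bi x))
    (i j : ℕ)
    (hqr : QuasiRegularAt (subT t (bDown (i, j))) ⟨(i, j), self_mem_bDown i j⟩) :
    ∀ x : BB, IsOpen ({x} : Set BB) := by
  letI : TopologicalSpace NN := TopologicalSpace.induced dg t
  have hdg : Continuous dg := continuous_induced_dom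
  have hinj : Function.Injective dg := fun a b h => congrArg Prod.fst h
  haveI : T1Space NN := t1Space_of_injective_of_continuous hinj hdg
  letI : LinearOrder NN := (inferInstance : LinearOrder ℕ)
  have hm2 : ∀ {X : Type} [TopologicalSpace X] (f g : X → BB), Continuous f → Continuous g →
      Continuous fun x => bm (f x) (g x) := fun f g hf hg =>
    hmul.comp (hf.prodMk hg)
  have hsand : ∀ {X : Type} [TopologicalSpace X] (c d : BB) (f : X → BB), Continuous f →
      Continuous fun x => bm (bm c (f x)) d := fun c d f hf =>
    hm2 _ _ (hm2 _ _ continuous_const hf) continuous_const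
  have hmax : Continuous fun p : NN × NN => max p.1 p.2 := by
    refine continuous_induced_rng.2 ?_
    convert hm2 (fun p : NN × NN => dg p.1) (fun p => dg p.2) (hdg.comp continuous_fst)
      (hdg.comp continuous_snd) using 1
    funext p
    obtain ⟨a, b⟩ := p
    change ℕ at a b
    change ((max a b, max a b) : ℕ × ℕ) = (a + (b - a), b + (a - b))
    ext <;> simp only <;> omega
  have hq : ∀ U : Set NN, IsOpen U → (show NN from (0 : ℕ)) ∈ U →
      ∃ V : Set NN, V.Nonempty ∧ IsOpen V ∧ closure V ⊆ U := by
    intro U hU h0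
    letI tY : TopologicalSpace (bDown (i, j)) := subT t (bDown (i, j))
    let φ : NN → bDown (i, j) := fun n => ⟨(i + (show ℕ from n), j + (show ℕ from n)),
      (mem_down i j _).2 ⟨n, rfl⟩⟩
    have hφ : Continuous φ := by
      refine continuous_induced_rng.2 ?_
      change Continuous (fun n : NN =>
        (show BB from (i + (show ℕ from n), j + (show ℕ from n))))
      convert hsand ((i, 0) : ℕ × ℕ) ((0, j) : ℕ × ℕ) dg hdg using 1
      funext n
      change ℕ at n
      change ((i + n, j + n) : ℕ × ℕ) = bmul (bmul (i, 0) (n, n)) (0, j)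
      simp only [bmul, Prod.mk.injEq]
      omega
    let ψ : bDown (i, j) → NN := fun y => (show ℕ from y.1.1 - i)
    have hψ : Continuous ψ := by
      refine continuous_induced_rng.2 ?_
      have hval : Continuous (fun y : bDown (i, j) => (show BB from y.1)) := continuous_induced_dom
      convert hsand ((0, i) : ℕ × ℕ) ((j, 0) : ℕ × ℕ) _ hval using 1
      funext y
      obtain ⟨y, hy⟩ := y
      obtain ⟨n, rfl⟩ := (mem_down i j y).1 hy
      change ((i + n - i, i + n - i) : ℕ × ℕ) = bmul (bmul (0, i) (i + n, j + n)) (j, 0)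
      simp only [bmul, Prod.mk.injEq]
      omega
    have hψφ : ∀ n, ψ (φ n) = n := by
      intro n
      change ℕ at n
      change i + n - i = n
      omega
    have hsurj : Function.Surjective φ := by
      rintro ⟨y, hy⟩
      obtain ⟨n, rfl⟩ := (mem_down i j y).1 hy
      exact ⟨n, rfl⟩
    obtain ⟨V, hVne, hV, hcl⟩ := hqr (ψ ⁻¹' U) (hU.preimage hψ) (by
      have : ψ ⟨(i, j), self_mem_bDown i j⟩ = (show NN from (0 : ℕ)) := Nat.sub_self i
      rw [Set.mem_preimage, this]; exact h0)
    refine ⟨φ ⁻¹' V, hVne.preimage hsurj, hV.preimage hφ, ?_⟩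
    intro n hn
    have := hcl (hφ.closure_preimage_subset V hn)
    rw [Set.mem_preimage, hψφ] at this
    exact this
  obtain ⟨x, hx⟩ := exists_isolated (N := NN) (fun n => Set.finite_Iic (show ℕ from n))
    (show ℕ from 0) (show ℕ from 1) (by exact Nat.zero_ne_one) hmax hq
  have hfinI : ∀ n : NN, (Set.Iio n).Finite := fun n => Set.finite_Iio (show ℕ from n)
  have h0 : IsOpen ({(show NN from (0 : ℕ))} : Set NN) := by
    have hc : Continuous (fun n : NN => (show NN from (show ℕ from n) + (show ℕ from x))) := by
      refine continuous_induced_rng.2 ?_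
      convert hsand ((x, 0) : ℕ × ℕ) ((0, x) : ℕ × ℕ) dg hdg using 1
      funext n
      change ℕ at n x
      change ((n + x, n + x) : ℕ × ℕ) = bmul (bmul (x, 0) (n, n)) (0, x)
      simp only [bmul, Prod.mk.injEq]
      omega
    convert hx.preimage hc using 1
    ext n
    change ℕ at n x
    change n = 0 ↔ n + x = x
    omega
  have hN : ∀ k : NN, IsOpen ({k} : Set NN) := by
    intro k
    have hc : Continuous (fun n : NN => (show NN from (show ℕ from n) - (show ℕ from k))) := by
      refine continuous_induced_rng.2 ?_
      convert hsand ((0, k) : ℕ × ℕ) ((k, 0) : ℕ × ℕ) dg hdg using 1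
      funext n
      change ℕ at n k
      change ((n - k, n - k) : ℕ × ℕ) = bmul (bmul (0, k) (n, n)) (k, 0)
      simp only [bmul, Prod.mk.injEq]
      omega
    convert (h0.preimage hc).sdiff (hfinI k).isClosed using 1
    ext n
    change ℕ at n k
    change n = k ↔ n - k = 0 ∧ ¬ n < k
    omega
  have hO : ∀ k : ℕ, ∃ O : Set BB, IsOpen O ∧ ∀ m : ℕ, ((m, m) : ℕ × ℕ) ∈ O ↔ m = k := by
    intro k
    obtain ⟨O, hO, h⟩ := isOpen_induced_iff.1 (hN k)
    exact ⟨O, hO, fun m => Set.ext_iff.1 h m⟩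
  rintro ⟨k, l⟩
  obtain ⟨O, hOo, hOk⟩ := hO k
  obtain ⟨P, hPo, hPl⟩ := hO l
  have c1 := hm2 (fun x : BB => x) (fun x => bi x) continuous_id hinv
  have c2 := hm2 (fun x : BB => bi x) (fun x => x) hinv continuous_id
  convert (hOo.preimage c1).inter (hPo.preimage c2) using 1
  ext ⟨a, b⟩
  have e1 : bmul (a, b) (binv (a, b)) = (a, a) := by simp [bmul, binv]
  have e2 : bmul (binv (a, b)) (a, b) = (b, b) := by simp [bmul, binv]
  change ((a, b) : ℕ × ℕ) = (k, l) ↔ bmul (a, b) (binv (a, b)) ∈ O ∧ bmul (binv (a, b)) (a, b) ∈ P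
  rw [e1, e2]
  refine Iff.trans ?_ (and_congr (hOk a) (hPl b)).symm
  simp


/-- Theorem 2: let `τ` be an inverse semigroup `T₁` topology on `C(p,q)` (i.e. the
multiplication is jointly continuous and the inversion is continuous). If the subspace
`↓≼ q^i p^j` is quasi-regular at `q^i p^j` for some point `q^i p^j`, then `τ` is
discrete. -/
theorem stmt14 (τ : TopologicalSpace (ℕ × ℕ))
    (hT1 : @T1Space (ℕ × ℕ) τ)
    (hmul : @Continuous ((ℕ × ℕ) × (ℕ × ℕ)) (ℕ × ℕ)
      (@instTopologicalSpaceProd (ℕ × ℕ) (ℕ × ℕ) τ τ) τ (fun p => bmul p.1 p.2))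
    (hinv : @Continuous (ℕ × ℕ) (ℕ × ℕ) τ τ binv)
    (i j : ℕ)
    (hqr : QuasiRegularAt (subT τ (bDown (i, j))) ⟨(i, j), self_mem_bDown i j⟩) :
    τ = ⊥ := by
  have h := @main_aux τ hT1 hmul hinv i j hqr
  exact (@discreteTopology_iff_isOpen_singleton (ℕ × ℕ) τ).2 h |>.eq_bot
end

section
/- Let τ be a shift-continuous T₁ topology on the bicyclic monoid C(p,q). If there exists a point q^i p^j ∈ C(p,q) such that the subspace ↓≼ q^i p^j is semiregular at q^i p^j, then for every point q^m p^n ∈ C(p,q) the subspace ↓≼ q^m p^n is semiregular at q^m p^n. -/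
/-- A space is semiregular at a point `x` if there is a neighbourhood basis at `x`
consisting of regular open sets, i.e. sets `U` with `U = int(cl(U))`. -/
def SemiregularAt {X : Type*} (t : TopologicalSpace X) (x : X) : Prop :=
  ∃ B : Set (Set X),
    (∀ U ∈ B, U = @interior X t (@closure X t U)) ∧
    (∀ U ∈ B, x ∈ U) ∧
    (∀ S : Set X, @IsOpen X t S → x ∈ S → ∃ U ∈ B, U ⊆ S)

def bshift (i j m n : ℕ) (x : ℕ × ℕ) : ℕ × ℕ := bmul (bmul (m, i) x) (j, n)

lemma bshift_apply (i j m n k : ℕ) : bshift i j m n (i + k, j + k) = (m + k, n + k) := by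
  simp only [bshift, bmul, Prod.mk.injEq]
  omega

lemma bshift_mem (i j m n : ℕ) (x : ℕ × ℕ) (hx : x ∈ bDown (i, j)) :
    bshift i j m n x ∈ bDown (m, n) := by
  obtain ⟨k, rfl⟩ := (mem_bDown_iff i j x).1 hx
  rw [bshift_apply]
  exact (mem_bDown_iff m n _).2 ⟨k, rfl⟩

lemma bshift_inv (i j m n : ℕ) (x : ℕ × ℕ) (hx : x ∈ bDown (i, j)) :
    bshift m n i j (bshift i j m n x) = x := by
  obtain ⟨k, rfl⟩ := (mem_bDown_iff i j x).1 hx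
  rw [bshift_apply, bshift_apply]

lemma semireg_transport {X Y : Type*} [tX : TopologicalSpace X] [tY : TopologicalSpace Y]
    (e : X ≃ₜ Y) (x : X) (h : SemiregularAt tX x) : SemiregularAt tY (e x) := by
  obtain ⟨B, h1, h2, h3⟩ := h
  refine ⟨(fun U => e '' U) '' B, ?_, ?_, ?_⟩
  · rintro _ ⟨U, hU, rfl⟩
    show e '' U = interior (closure (e '' U))
    rw [← e.image_closure, ← e.image_interior, ← h1 U hU]
  · rintro _ ⟨U, hU, rfl⟩
    exact ⟨x, h2 U hU, rfl⟩
  · intro S hS hx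
    obtain ⟨U, hU, hUS⟩ := h3 (e ⁻¹' S) (hS.preimage e.continuous) hx
    exact ⟨_, ⟨U, hU, rfl⟩, Set.image_subset_iff.2 hUS⟩

/-- Lemma 5: let `τ` be a shift-continuous `T₁` topology on `C(p,q)`. If the subspace
`↓≼ q^i p^j` is semiregular at `q^i p^j` for some point `q^i p^j`, then for every point
`q^m p^n` the subspace `↓≼ q^m p^n` is semiregular at `q^m p^n`. -/
theorem stmt15 (τ : TopologicalSpace (ℕ × ℕ))
    (hT1 : @T1Space (ℕ × ℕ) τ)
    (hleft : ∀ a : ℕ × ℕ, @Continuous (ℕ × ℕ) (ℕ × ℕ) τ τ (fun x => bmul a x))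
    (hright : ∀ a : ℕ × ℕ, @Continuous (ℕ × ℕ) (ℕ × ℕ) τ τ (fun x => bmul x a))
    (i j : ℕ)
    (hsr : SemiregularAt (subT τ (bDown (i, j))) ⟨(i, j), self_mem_bDown i j⟩) :
    ∀ m n : ℕ, SemiregularAt (subT τ (bDown (m, n))) ⟨(m, n), self_mem_bDown m n⟩ := by
  intro m n
  letI := τ
  have hc : ∀ i j m n, Continuous (bshift i j m n) := fun i j m n =>
    (hright (j, n)).comp (hleft (m, i))
  let e : bDown (i, j) ≃ₜ bDown (m, n) :=
    { toFun := fun x => ⟨bshift i j m n x, bshift_mem i j m n x x.2⟩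
      invFun := fun x => ⟨bshift m n i j x, bshift_mem m n i j x x.2⟩
      left_inv := fun x => Subtype.ext (bshift_inv i j m n x x.2)
      right_inv := fun x => Subtype.ext (bshift_inv m n i j x x.2)
      continuous_toFun := ((hc i j m n).comp continuous_subtype_val).subtype_mk _
      continuous_invFun := ((hc m n i j).comp continuous_subtype_val).subtype_mk _ }
  have hx : e ⟨(i, j), self_mem_bDown i j⟩ = ⟨(m, n), self_mem_bDown m n⟩ :=
    Subtype.ext (bshift_apply i j m n 0)
  have := semireg_transport e _ hsr
  rw [hx] at this
  exact this
end

section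
/- Let τ be a shift-continuous T₁ topology on the bicyclic monoid C(p,q) such that the maps C(p,q) → E(C(p,q)), x ↦ x·x^{-1} and x ↦ x^{-1}·x are continuous. If there exists an idempotent q^i p^i ∈ C(p,q) such that the subspace E(C(p,q)) of idempotents is semiregular at q^i p^i, then τ is the discrete topology. -/
lemma core_meet {X : Type*} [TopologicalSpace X] [T1Space X] (e : X ≃ ℕ)
    (hmax : ∀ n, Continuous (fun x => e.symm (max (e x) n)))
    (hno : ∀ x : X, ¬ IsOpen ({x} : Set X)) (a b : X) (hab : e a ≤ e b)
    (V W : Set X) (hV : IsOpen V) (hW : IsOpen W) (ha : a ∈ V) (hb : b ∈ W) :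
    (V ∩ W).Nonempty := by
  by_contra hne
  rw [Set.not_nonempty_iff_eq_empty] at hne
  apply hno a
  have hfin : ({x | e x ≤ e b ∧ x ≠ a} : Set X).Finite := by
    apply Set.Finite.subset (Set.Finite.preimage e.injective.injOn (Set.finite_Iic (e b)))
    intro x hx
    exact hx.1
  have h1 : IsOpen ((V ∩ (fun x => e.symm (max (e x) (e b))) ⁻¹' W) ∩
      ({x | e x ≤ e b ∧ x ≠ a} : Set X)ᶜ) :=
    (hV.inter (hW.preimage (hmax _))).inter hfin.isClosed.isOpen_compl
  convert h1 using 1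
  ext x
  simp only [Set.mem_singleton_iff, Set.mem_inter_iff, Set.mem_preimage, Set.mem_compl_iff,
    Set.mem_setOf_eq]
  constructor
  · rintro rfl
    refine ⟨⟨ha, ?_⟩, fun h => h.2 rfl⟩
    rw [max_eq_right hab]; simpa using hb
  · rintro ⟨⟨h1, h2⟩, h3⟩
    by_contra hxa
    have h4 : e b ≤ e x := by
      by_contra h5
      exact h3 ⟨by omega, hxa⟩
    rw [max_eq_left h4] at h2
    have : x ∈ V ∩ W := ⟨h1, by simpa using h2⟩
    rw [hne] at this
    exact this

lemma core_isolated {X : Type*} [t : TopologicalSpace X] [T1Space X] (e : X ≃ ℕ)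
    (hmax : ∀ n, Continuous (fun x => e.symm (max (e x) n)))
    (x : X) (hsr : SemiregularAt t x) : ∃ x : X, IsOpen ({x} : Set X) := by
  by_contra hno
  push Not at hno
  obtain ⟨B, hB, hx, hbas⟩ := hsr
  have hne : x ≠ e.symm (e x + 1) := by
    intro h
    have := congrArg e h
    simp at this
  obtain ⟨U, hU, hUS⟩ := hbas {e.symm (e x + 1)}ᶜ isOpen_compl_singleton hne
  have hUo : IsOpen U := by rw [hB U hU]; exact isOpen_interior
  have hcl : closure U = Set.univ := by
    rw [Set.eq_univ_iff_forall]
    intro y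
    rw [mem_closure_iff]
    intro W hW hy
    rcases le_total (e x) (e y) with h | h
    · rw [Set.inter_comm]
      exact core_meet e hmax hno x y h U W hUo hW (hx U hU) hy
    · exact core_meet e hmax hno y x h W U hW hUo hy (hx U hU)
  have hall : U = Set.univ := by rw [hB U hU, hcl, interior_univ]
  have : e.symm (e x + 1) ∈ U := by rw [hall]; trivial
  exact hUS this rfl

lemma mem_bE_iff (x : ℕ × ℕ) : x ∈ bE ↔ x.1 = x.2 := by
  obtain ⟨k, l⟩ := x
  simp only [bE, bmul, Set.mem_setOf_eq, Prod.mk.injEq]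
  omega

def bEequiv : bE ≃ ℕ where
  toFun x := x.1.1
  invFun n := ⟨(n, n), idem_mem n⟩
  left_inv := by
    rintro ⟨⟨k, l⟩, h⟩
    have := (mem_bE_iff _).1 h
    simp only at this
    subst this
    rfl
  right_inv := fun n => rfl

/-- Proposition 5: let `τ` be a shift-continuous `T₁` topology on `C(p,q)` such that the
maps `x ↦ x·x⁻¹` and `x ↦ x⁻¹·x` into `E(C(p,q))` are continuous. If the subspace of
idempotents `E(C(p,q))` is semiregular at some idempotent `q^i p^i`, then `τ` is
discrete. -/
theorem stmt16 (τ : TopologicalSpace (ℕ × ℕ))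
    (hT1 : @T1Space (ℕ × ℕ) τ)
    (hleft : ∀ a : ℕ × ℕ, @Continuous (ℕ × ℕ) (ℕ × ℕ) τ τ (fun x => bmul a x))
    (hright : ∀ a : ℕ × ℕ, @Continuous (ℕ × ℕ) (ℕ × ℕ) τ τ (fun x => bmul x a))
    (hmi : @Continuous (ℕ × ℕ) bE τ (subT τ bE)
      (fun x => ⟨bmul x (binv x), bmul_binv_mem x⟩))
    (him : @Continuous (ℕ × ℕ) bE τ (subT τ bE)
      (fun x => ⟨bmul (binv x) x, binv_bmul_mem x⟩))
    (i : ℕ)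
    (hsr : SemiregularAt (subT τ bE) ⟨(i, i), idem_mem i⟩) :
    τ = ⊥ := by
  letI := τ
  haveI := hT1
  have hsub : subT τ bE = instTopologicalSpaceSubtype := rfl
  rw [hsub] at hmi him hsr
  have hmax : ∀ n, Continuous (fun x : bE => bEequiv.symm (max (bEequiv x) n)) := by
    intro n
    rw [continuous_induced_rng]
    convert (hright (n, n)).comp continuous_subtype_val using 1
    funext x
    have := (mem_bE_iff x.1).1 x.2
    obtain ⟨⟨k, l⟩, h⟩ := x
    simp only at this
    subst this
    simp only [bEequiv, bmul, Function.comp, Equiv.coe_fn_mk, Equiv.coe_fn_symm_mk,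
      Prod.mk.injEq]
    omega
  obtain ⟨z, hz⟩ := core_isolated bEequiv hmax _ hsr
  obtain ⟨⟨n, n'⟩, h⟩ := z
  have := (mem_bE_iff _).1 h
  simp only at this
  subst this
  have hnn : IsOpen ({(n, n)} : Set (ℕ × ℕ)) := by
    convert (hz.preimage hmi).inter (hz.preimage him) using 1
    ext ⟨k, l⟩
    simp only [bmul, binv, Set.mem_singleton_iff, Set.mem_inter_iff, Set.mem_preimage,
      Subtype.mk.injEq, Prod.mk.injEq]
    omega
  apply eq_bot_of_singletons_open
  rintro ⟨k, l⟩
  have hO : IsOpen ((fun x => bmul (bmul (n, k) x) (l, n)) ⁻¹' ({(n, n)} : Set (ℕ × ℕ))) :=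
    hnn.preimage ((hright (l, n)).comp (hleft (n, k)))
  have hfin : (((Set.Iic k) ×ˢ (Set.Iic l)) \ {(k, l)} : Set (ℕ × ℕ)).Finite :=
    ((Set.finite_Iic k).prod (Set.finite_Iic l)).subset Set.diff_subset
  convert hO.inter hfin.isClosed.isOpen_compl using 1
  ext ⟨a, b⟩
  simp only [bmul, Set.mem_singleton_iff, Set.mem_inter_iff, Set.mem_preimage, Prod.mk.injEq,
    Set.mem_compl_iff, Set.mem_diff, Set.mem_prod, Set.mem_Iic]
  omega
end

section
/- Let τ be a shift-continuous T₁ topology on the bicyclic monoid C(p,q) such that the maps C(p,q) → E(C(p,q)), x ↦ x·x^{-1} and x ↦ x^{-1}·x are continuous. If there exists a point q^i p^j ∈ C(p,q) such that the subspace ↓≼ q^i p^j is semiregular at q^i p^j, then τ is the discrete topology. -/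
/-- Theorem 3: let `τ` be a shift-continuous `T₁` topology on `C(p,q)` such that the maps
`x ↦ x·x⁻¹` and `x ↦ x⁻¹·x` into `E(C(p,q))` are continuous. If the subspace `↓≼ q^i p^j`
is semiregular at `q^i p^j` for some point `q^i p^j`, then `τ` is discrete. -/
theorem stmt17 (τ : TopologicalSpace (ℕ × ℕ))
    (hT1 : @T1Space (ℕ × ℕ) τ)
    (hleft : ∀ a : ℕ × ℕ, @Continuous (ℕ × ℕ) (ℕ × ℕ) τ τ (fun x => bmul a x))
    (hright : ∀ a : ℕ × ℕ, @Continuous (ℕ × ℕ) (ℕ × ℕ) τ τ (fun x => bmul x a))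
    (hmi : @Continuous (ℕ × ℕ) bE τ (subT τ bE)
      (fun x => ⟨bmul x (binv x), bmul_binv_mem x⟩))
    (him : @Continuous (ℕ × ℕ) bE τ (subT τ bE)
      (fun x => ⟨bmul (binv x) x, binv_bmul_mem x⟩))
    (i j : ℕ)
    (hsr : SemiregularAt (subT τ (bDown (i, j))) ⟨(i, j), self_mem_bDown i j⟩) :
    τ = ⊥ := by
  letI := τ
  have hmem : ∀ n : ℕ, ((i + n, j + n) : ℕ × ℕ) ∈ bDown (i, j) := fun n =>
    ⟨(j + n, j + n), by simp [bmul], by simp [bmul]⟩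
  have hform : ∀ y ∈ bDown (i, j), ∃ n : ℕ, y = (i + n, j + n) := by
    rintro y ⟨⟨a, b⟩, he, rfl⟩
    simp only [bmul, Prod.mk.injEq] at he ⊢
    refine ⟨a - j, ?_, ?_⟩ <;> omega
  -- the top point of the down-set is isolated in it
  have hiso : ∃ O : Set (ℕ × ℕ), IsOpen O ∧ (i, j) ∈ O ∧
      ∀ n : ℕ, (i + n, j + n) ∈ O → n = 0 := by
    by_contra hno
    push Not at hno
    obtain ⟨B, hB1, hB2, hB3⟩ := hsr
    letI tY : TopologicalSpace (bDown (i, j)) := subT τ (bDown (i, j))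
    have hval : Continuous (Subtype.val : bDown (i, j) → ℕ × ℕ) := continuous_induced_dom
    have hS : IsOpen ((Subtype.val : bDown (i, j) → ℕ × ℕ) ⁻¹' {(i + 1, j + 1)}ᶜ) :=
      (isOpen_compl_singleton).preimage hval
    obtain ⟨U, hUB, hUS⟩ := hB3 _ hS (by simp)
    have hU := hB1 U hUB
    have hxU := hB2 U hUB
    have hUo : IsOpen U := by rw [hU]; exact isOpen_interior
    obtain ⟨U', hU'o, hU'⟩ := isOpen_induced_iff.1 hUo
    have hcl : closure U = Set.univ := by
      rw [Set.eq_univ_iff_forall]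
      rintro ⟨y, hy⟩
      obtain ⟨n, rfl⟩ := hform y hy
      rw [mem_closure_iff]
      intro W hWo hyW
      obtain ⟨W', hW'o, hW'⟩ := isOpen_induced_iff.1 hWo
      have hfin : Set.Finite ((fun m : ℕ => ((i + m, j + m) : ℕ × ℕ)) '' Set.Icc 1 n) :=
        (Set.finite_Icc 1 n).image _
      have hO : IsOpen (U' ∩ ((fun x => bmul x (j + n, j + n)) ⁻¹' W') ∩
          ((fun m : ℕ => ((i + m, j + m) : ℕ × ℕ)) '' Set.Icc 1 n)ᶜ) :=
        (hU'o.inter (hW'o.preimage (hright _))).inter hfin.isClosed.isOpen_compl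
      have hyW2 : (i + n, j + n) ∈ W' := by
        have : (⟨(i + n, j + n), hy⟩ : bDown (i, j)) ∈ Subtype.val ⁻¹' W' := by
          rw [hW']; exact hyW
        exact this
      have hxU2 : (i, j) ∈ U' := by
        rw [← hU'] at hxU; exact hxU
      obtain ⟨m, hm, hm0⟩ := hno _ hO (by
        refine ⟨⟨hxU2, ?_⟩, ?_⟩
        · simpa [bmul] using hyW2
        · rintro ⟨m, hm, h⟩
          simp only [Prod.mk.injEq, Set.mem_Icc] at h hm
          omega)
      obtain ⟨⟨h1, h2⟩, h3⟩ := hm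
      have hmn : n < m := by
        by_contra hlt
        exact h3 ⟨m, ⟨by omega, by omega⟩, rfl⟩
      refine ⟨⟨(i + m, j + m), hmem m⟩, ?_, ?_⟩
      · rw [← hW']
        have e : bmul (i + m, j + m) (j + n, j + n) = (i + m, j + m) := by
          simp only [bmul, Prod.mk.injEq]; omega
        simp only [Set.mem_preimage, e] at h2
        exact h2
      · rw [← hU']; exact h1
    rw [hcl, interior_univ] at hU
    have : (⟨(i + 1, j + 1), hmem 1⟩ : bDown (i, j)) ∈ U := by rw [hU]; trivial
    exact hUS this rfl
  obtain ⟨O, hO, hxO, hOn⟩ := hiso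
  have hE : ∀ n : ℕ, ∃ P : Set (ℕ × ℕ), IsOpen P ∧ (n, n) ∈ P ∧ ∀ k : ℕ, (k, k) ∈ P → k = n := by
    intro n
    have hfin : Set.Finite ((fun m : ℕ => ((m, m) : ℕ × ℕ)) '' Set.Iio n) :=
      (Set.finite_Iio n).image _
    refine ⟨((fun x => bmul (bmul (i, n) x) (n, j)) ⁻¹' O) ∩
      ((fun m : ℕ => ((m, m) : ℕ × ℕ)) '' Set.Iio n)ᶜ,
      (hO.preimage ((hright (n, j)).comp (hleft (i, n)))).inter hfin.isClosed.isOpen_compl,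
      ⟨by simpa [bmul] using hxO, ?_⟩, ?_⟩
    · rintro ⟨m, hm, h⟩
      simp only [Prod.mk.injEq, Set.mem_Iio] at h hm
      omega
    · rintro k ⟨h1, h2⟩
      have hk : n ≤ k := by
        by_contra hlt
        exact h2 ⟨k, by simpa using hlt, rfl⟩
      have e : bmul (bmul (i, n) (k, k)) (n, j) = (i + (k - n), j + (k - n)) := by
        simp only [bmul, Prod.mk.injEq]; omega
      simp only [Set.mem_preimage, e] at h1
      have := hOn _ h1
      omega
  letI tE : TopologicalSpace bE := subT τ bE
  have hvE : Continuous (Subtype.val : bE → ℕ × ℕ) := continuous_induced_dom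
  have c1 : Continuous (fun x : ℕ × ℕ => bmul x (binv x)) := hvE.comp hmi
  have c2 : Continuous (fun x : ℕ × ℕ => bmul (binv x) x) := hvE.comp him
  have hd : DiscreteTopology (ℕ × ℕ) := by
    rw [discreteTopology_iff_isOpen_singleton]
    rintro ⟨k, l⟩
    obtain ⟨P, hP, hkP, hP2⟩ := hE k
    obtain ⟨Q, hQ, hlQ, hQ2⟩ := hE l
    convert (hP.preimage c1).inter (hQ.preimage c2) using 1
    ext ⟨a, b⟩
    simp only [Set.mem_singleton_iff, Set.mem_inter_iff, Set.mem_preimage, bmul, binv,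
      Nat.sub_self, Nat.add_zero, Prod.mk.injEq]
    constructor
    · rintro ⟨rfl, rfl⟩; exact ⟨hkP, hlQ⟩
    · rintro ⟨h1, h2⟩; exact ⟨hP2 _ h1, hQ2 _ h2⟩
  exact hd.eq_bot
end
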